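/- Let Ω ⊆ ℝ^{d+1} be an L₀-Lipschitz graph domain. There exist constants δ₀ > 0 and L₁ > 0, depending only on L₀ and d, such that for every 0 < δ < δ₀ the following holds: if φ is a C¹ map defined on a neighborhood of the closure of Ω which is (1+δ)-bi-Lipschitz from the closure of Ω onto its image (i.e. (1+δ)^{-1}|z−z'| ≤ |φ(z)−φ(z')| ≤ (1+δ)|z−z'|) and satisfies ‖Dφ(z) − I‖ ≤ δ for all z in the closure of Ω, then φ(Ω) is an L₁-Lipschitz graph domain. -/

import Mathlib

open Metric MeasureTheory Set
open scoped ENNReal NNReal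

noncomputable section

/-- `Ω ⊆ ℝ^{d+1}` is an `M`-Lipschitz graph domain: an open connected set such that, after
applying a composition `x ↦ c • R x + b` of a translation, dilation and rotation, its boundary
is the radial graph of an `M`-Lipschitz function `r : S^d → [1/(1+M), 1]`. -/
def IsLipschitzGraphDomain (d : ℕ) (M : ℝ) (Ω : Set (EuclideanSpace ℝ (Fin (d + 1)))) : Prop :=
  IsOpen Ω ∧ IsConnected Ω ∧
  ∃ (c : ℝ) (R : EuclideanSpace ℝ (Fin (d + 1)) ≃ₗᵢ[ℝ] EuclideanSpace ℝ (Fin (d + 1)))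
    (b : EuclideanSpace ℝ (Fin (d + 1))) (rf : EuclideanSpace ℝ (Fin (d + 1)) → ℝ),
    0 < c ∧
    frontier ((fun x => c • R x + b) '' Ω) =
      {y | ∃ θ ∈ Metric.sphere (0 : EuclideanSpace ℝ (Fin (d + 1))) 1, y = rf θ • θ} ∧
    (∀ θ ∈ Metric.sphere (0 : EuclideanSpace ℝ (Fin (d + 1))) 1,
      ∀ ψ ∈ Metric.sphere (0 : EuclideanSpace ℝ (Fin (d + 1))) 1,
        |rf θ - rf ψ| ≤ M * dist θ ψ) ∧
    (∀ θ ∈ Metric.sphere (0 : EuclideanSpace ℝ (Fin (d + 1))) 1,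
      1 / (1 + M) ≤ rf θ ∧ rf θ ≤ 1)

/-! Write `φ = id + f`, where `Df` is small on `closure Ω`. Bounding `Df` along segments controls
`f x - f y` only when the segment from `x` to `y` stays in `closure Ω`. Otherwise one stops at the
first points `p` and `q` where the segment, run from either end, meets the frontier. The frontier is
a bi-Lipschitz copy of a sphere, in which nearby points are joined by short arcs, so `f p - f q` is
controlled as well, and `f` is Lipschitz on `closure Ω` with a small constant. (In dimension one,
`closure Ω` is convex and the frontier is not needed.)

Now normalize so that the frontier is a radial graph and `f` vanishes at one of its points. Extend
`f` from the radial graph to a positively homogeneous map `K`, which is still Lipschitz with a small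
constant. Then `id + K` is a bi-Lipschitz bijection which agrees with `φ` on the frontier and maps
rays to rays, hence radial graphs to radial graphs. Finally, `φ` maps the frontier of `Ω` onto the
frontier of `φ '' Ω`, because it is a small Lipschitz perturbation of the identity on `closure Ω`.
-/

section Lipschitz

variable {X E : Type*} [PseudoMetricSpace X] [SeminormedAddCommGroup E] [NormedSpace ℝ E]

lemma lipschitzOnWith_inv_real {K m : ℝ≥0} {f : X → ℝ} {s : Set X} (hf : LipschitzOnWith K f s)
    (hm : 0 < m) (hfm : ∀ x ∈ s, m ≤ f x) :
    LipschitzOnWith (K / m ^ 2) (fun x => (f x)⁻¹) s := by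
  refine LipschitzOnWith.of_dist_le_mul fun x hx y hy => ?_
  have hmx := hfm x hx
  have hmy := hfm y hy
  have hm' : (0 : ℝ) < m := hm
  have hx0 := hm'.trans_le hmx
  have hy0 := hm'.trans_le hmy
  rw [dist_inv_inv₀ hx0.ne' hy0.ne', Real.norm_of_nonneg hx0.le, Real.norm_of_nonneg hy0.le]
  calc dist (f x) (f y) / (f x * f y) ≤ K * dist x y / (m * m) := by
        gcongr
        exact hf.dist_le_mul x hx y hy
    _ = ↑(K / m ^ 2) * dist x y := by push_cast; ring

lemma lipschitzOnWith_smul_of_bounded {Kc Kf Bc Bf : ℝ≥0} {c : X → ℝ} {f : X → E} {s : Set X}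
    (hc : LipschitzOnWith Kc c s) (hcB : ∀ x ∈ s, |c x| ≤ Bc)
    (hf : LipschitzOnWith Kf f s) (hfB : ∀ x ∈ s, ‖f x‖ ≤ Bf) :
    LipschitzOnWith (Bc * Kf + Kc * Bf) (fun x => c x • f x) s := by
  refine LipschitzOnWith.of_dist_le_mul fun x hx y hy => ?_
  calc dist (c x • f x) (c y • f y)
      ≤ dist (c x • f x) (c x • f y) + dist (c x • f y) (c y • f y) := dist_triangle _ _ _
    _ ≤ |c x| * dist (f x) (f y) + dist (c x) (c y) * ‖f y‖ :=
        add_le_add (dist_smul_le _ _ _) ((dist_pair_smul _ _ _).trans (by rw [dist_zero_right]))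
    _ ≤ Bc * (Kf * dist x y) + Kc * dist x y * Bf := by
        gcongr
        exacts [hcB x hx, hf.dist_le_mul x hx y hy, hc.dist_le_mul x hx y hy, hfB y hy]
    _ = ↑(Bc * Kf + Kc * Bf) * dist x y := by push_cast; ring

end Lipschitz

section Normalize

open NormedSpace

variable {E : Type*} [NormedAddCommGroup E] [NormedSpace ℝ E]

lemma normalize_mem_sphere {x : E} (hx : x ≠ 0) : normalize x ∈ sphere (0 : E) 1 :=
  mem_sphere_zero_iff_norm.2 (norm_normalize hx)

lemma normalize_eq_self_of_mem_sphere {a : E} (ha : a ∈ sphere (0 : E) 1) : normalize a = a :=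
  normalize_eq_self_of_norm_eq_one (mem_sphere_zero_iff_norm.1 ha)

lemma norm_mul_dist_normalize_le (x : E) {y : E} (hy : y ≠ 0) :
    ‖x‖ * dist (normalize x) (normalize y) ≤ 2 * dist x y := by
  calc ‖x‖ * dist (normalize x) (normalize y)
      = ‖(x - y) + (‖y‖ - ‖x‖) • normalize y‖ := by
        rw [dist_eq_norm, ← norm_smul_of_nonneg (norm_nonneg x), smul_sub, sub_smul,
          norm_smul_normalize, norm_smul_normalize, sub_add_sub_cancel]
    _ ≤ ‖x - y‖ + |‖y‖ - ‖x‖| := by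
        grw [norm_add_le, norm_smul, norm_normalize hy, mul_one, Real.norm_eq_abs]
    _ ≤ 2 * dist x y := by
        grw [abs_norm_sub_norm_le, norm_sub_rev y x, ← two_mul, dist_eq_norm]

lemma lipschitzOnWith_normalize {m : ℝ≥0} (hm : 0 < m) :
    LipschitzOnWith (2 / m) (normalize : E → E) {x | (m : ℝ) ≤ ‖x‖} := by
  refine LipschitzOnWith.of_dist_le_mul fun x hx y hy => ?_
  have hm' : (0 : ℝ) < m := hm
  have hy0 : y ≠ 0 := norm_pos_iff.1 (hm'.trans_le hy)
  push_cast
  rw [div_mul_eq_mul_div, le_div_iff₀' hm']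
  exact (mul_le_mul_of_nonneg_right hx dist_nonneg).trans (norm_mul_dist_normalize_le x hy0)

end Normalize

section Frontier

lemma exists_mem_frontier_of_isPreconnected {X : Type*} [TopologicalSpace X] {s t : Set X}
    (ht : IsPreconnected t) (hs : IsClosed s) (hts : (t ∩ s).Nonempty) (hts' : ¬ t ⊆ s) :
    (t ∩ frontier s).Nonempty := by
  by_contra! hempty
  have hint : t ∩ s ⊆ interior s := fun x ⟨hxt, hxs⟩ => by
    by_contra hx
    exact hempty.subset ⟨hxt, hs.frontier_eq ▸ ⟨hxs, hx⟩⟩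
  obtain ⟨x, -, hxi, hxs⟩ := ht _ _ isOpen_interior hs.isOpen_compl
    (fun x hx => (em (x ∈ s)).imp (fun h => hint ⟨hx, h⟩) id)
    (hts.mono fun x hx => ⟨hx.1, hint hx⟩) (not_subset.1 hts')
  exact hxs (interior_subset hxi)

variable {E F : Type*} [NormedAddCommGroup E] [NormedSpace ℝ E]

lemma isCompact_segment (x y : E) : IsCompact (segment ℝ x y) := by
  rw [segment_eq_image_lineMap]
  exact isCompact_Icc.image AffineMap.lineMap_continuous

lemma exists_mem_frontier_segment_subset {s : Set E} (hs : IsClosed s) {x y : E} (hx : x ∈ s)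
    (hy : y ∉ s) : ∃ p ∈ frontier s, p ∈ segment ℝ x y ∧ segment ℝ x p ⊆ s := by
  have crossing {z : E} (hz : z ∉ s) : (segment ℝ x z ∩ frontier s).Nonempty :=
    exists_mem_frontier_of_isPreconnected (convex_segment x z).isPreconnected hs
      ⟨x, left_mem_segment ℝ x z, hx⟩ fun h => hz (h (right_mem_segment ℝ x z))
  obtain ⟨p, ⟨hpxy, hpf⟩, hmin⟩ := ((isCompact_segment x y).inter_right isClosed_frontier)
    |>.exists_isMinOn (crossing hy) (f := dist x) (by fun_prop)
  refine ⟨p, hpf, hpxy, fun z hz => ?_⟩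
  by_contra hzs
  obtain ⟨q, hq, hqf⟩ := crossing hzs
  have hsub {w v : E} (h : w ∈ segment ℝ x v) : segment ℝ x w ⊆ segment ℝ x v :=
    (convex_segment x v).segment_subset (left_mem_segment ℝ x v) h
  have hpq : dist x p ≤ dist x q := hmin ⟨hsub hpxy (hsub hz hq), hqf⟩
  have hxz := dist_add_dist_of_mem_segment hz
  have hxq := dist_add_dist_of_mem_segment hq
  have hzp : z = p := dist_le_zero.1 (by linarith [dist_nonneg (x := q) (y := z)])
  exact hzs (hzp ▸ hs.frontier_subset hpf)

lemma lipschitzOnWith_of_lipschitzOnWith_frontier [PseudoMetricSpace F] {s : Set E} {f : E → F}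
    {K : ℝ≥0} (hs : IsClosed s) (hseg : ∀ x y, segment ℝ x y ⊆ s → dist (f x) (f y) ≤ K * dist x y)
    (hf : LipschitzOnWith K f (frontier s)) : LipschitzOnWith K f s := by
  refine LipschitzOnWith.of_dist_le_mul fun x hx y hy => ?_
  by_cases hxy : segment ℝ x y ⊆ s
  · exact hseg x y hxy
  obtain ⟨w, hw, hws⟩ := not_subset.1 hxy
  obtain ⟨p, hpf, hp, hxp⟩ := exists_mem_frontier_segment_subset hs hx hws
  obtain ⟨q, hqf, hq, hyq⟩ := exists_mem_frontier_segment_subset hs hy hws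
  have hlen : dist x p + dist p q + dist y q ≤ dist x y := by
    have := dist_add_dist_of_mem_segment hw
    have := dist_add_dist_of_mem_segment hp
    have := dist_add_dist_of_mem_segment hq
    linarith [dist_triangle_right p q w, dist_comm w y]
  calc dist (f x) (f y) ≤ dist (f x) (f p) + dist (f p) (f q) + dist (f y) (f q) := by
        rw [dist_comm (f y)]; exact dist_triangle4 _ _ _ _
    _ ≤ K * dist x p + K * dist p q + K * dist y q :=
        add_le_add_three (hseg x p hxp) (hf.dist_le_mul p hpf q hqf) (hseg y q hyq)
    _ ≤ K * dist x y := by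
        rw [← mul_add, ← mul_add]; gcongr

end Frontier

section Path

open Filter Topology

variable {E F : Type*} [NormedAddCommGroup E] [NormedSpace ℝ E] [NormedAddCommGroup F]
  [NormedSpace ℝ F]

lemma eventually_norm_sub_le_of_hasFDerivWithinAt {f : E → F} {f' : E →L[ℝ] F} {s : Set E}
    {x : E} {C : ℝ} (hf : HasFDerivWithinAt f f' s x) (hC : ‖f'‖ < C) :
    ∀ᶠ y in 𝓝[s] x, ‖f y - f x‖ ≤ C * ‖y - x‖ := by
  filter_upwards [hf.isLittleO.def (sub_pos.2 hC)] with y hy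
  calc ‖f y - f x‖ ≤ ‖f y - f x - f' (y - x)‖ + ‖f' (y - x)‖ := norm_le_norm_sub_add _ _
    _ ≤ (C - ‖f'‖) * ‖y - x‖ + ‖f'‖ * ‖y - x‖ := add_le_add hy (f'.le_opNorm _)
    _ = C * ‖y - x‖ := by ring

lemma eventually_dist_comp_le_of_hasFDerivWithinAt {f : E → F} {f' : E →L[ℝ] F} {s : Set E}
    {γ : ℝ → E} {C K : ℝ≥0} {t : ℝ} (hf : HasFDerivWithinAt f f' s (γ t)) (hC : ‖f'‖ < C)
    (hγ : LipschitzOnWith K γ (Icc 0 1)) (hγs : MapsTo γ (Icc 0 1) s) (ht : t ∈ Ico (0 : ℝ) 1) :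
    ∀ᶠ z in 𝓝[>] t, dist (f (γ z)) (f (γ t)) ≤ C * K * (z - t) := by
  have ht' : t ∈ Icc (0 : ℝ) 1 := Ico_subset_Icc_self ht
  have hIcc : Icc (0 : ℝ) 1 ∈ 𝓝[>] t :=
    mem_of_superset (Ioo_mem_nhdsGT ht.2) fun z hz => ⟨ht.1.trans hz.1.le, hz.2.le⟩
  have hγt : Tendsto γ (𝓝[>] t) (𝓝[s] γ t) :=
    tendsto_nhdsWithin_of_tendsto_nhds_of_eventually_within _
      ((hγ.continuousOn t ht').mono_of_mem_nhdsWithin hIcc) (mem_of_superset hIcc hγs)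
  filter_upwards [hγt.eventually (eventually_norm_sub_le_of_hasFDerivWithinAt hf hC), hIcc,
    self_mem_nhdsWithin] with z hz hzI htz
  calc dist (f (γ z)) (f (γ t)) ≤ C * dist (γ z) (γ t) := by simpa only [dist_eq_norm] using hz
    _ ≤ C * (K * (z - t)) := by
        grw [hγ.dist_le_mul z hzI t ht', Real.dist_eq, abs_of_pos (sub_pos.2 htz)]
    _ = C * K * (z - t) := (mul_assoc _ _ _).symm

lemma dist_image_le_of_lipschitzOnWith_path {f : E → F} {f' : E → E →L[ℝ] F} {s : Set E}
    {γ : ℝ → E} {δ K : ℝ≥0} (hf : ∀ x ∈ s, HasFDerivWithinAt f (f' x) s x)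
    (hδ : ∀ x ∈ s, ‖f' x‖₊ ≤ δ) (hγ : LipschitzOnWith K γ (Icc 0 1))
    (hγs : MapsTo γ (Icc 0 1) s) : dist (f (γ 0)) (f (γ 1)) ≤ δ * K := by
  have hfγ : ContinuousOn (f ∘ γ) (Icc 0 1) :=
    ContinuousOn.comp (fun x hx => (hf x hx).continuousWithinAt) hγ.continuousOn hγs
  suffices h : ∀ t ∈ Icc (0 : ℝ) 1, dist (f (γ 0)) (f (γ t)) ≤ δ * K * t by
    simpa using h 1 (right_mem_Icc.2 zero_le_one)
  refine image_le_of_liminf_slope_right_le_deriv_boundary (B' := fun _ => δ * K)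
    ((continuous_const.dist continuous_id).comp_continuousOn hfγ) (by simp) (by fun_prop)
    (fun t _ => by simpa using ((hasDerivAt_id t).const_mul (δ * K : ℝ)).hasDerivWithinAt) ?_
  intro t ht r hr
  have hγt : γ t ∈ s := hγs (Ico_subset_Icc_self ht)
  obtain ⟨C, hCr, hδC⟩ : ∃ C : ℝ≥0, C * K < r ∧ δ < C :=
    have hlt : ∀ᶠ C : ℝ≥0 in 𝓝[>] δ, (C * K : ℝ) < r :=
      ((by fun_prop : Continuous fun C : ℝ≥0 => (C * K : ℝ)).continuousAt.eventually_lt_const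
        hr).filter_mono nhdsWithin_le_nhds
    (hlt.and self_mem_nhdsWithin).exists
  refine Eventually.frequently ?_
  filter_upwards [eventually_dist_comp_le_of_hasFDerivWithinAt (hf _ hγt)
    (NNReal.coe_lt_coe.2 ((hδ _ hγt).trans_lt hδC)) hγ hγs ht, self_mem_nhdsWithin] with z hz htz
  have htz' : 0 < z - t := sub_pos.2 htz
  rw [slope_def_field, div_lt_iff₀ htz']
  calc dist (f (γ 0)) (f (γ z)) - dist (f (γ 0)) (f (γ t)) ≤ dist (f (γ z)) (f (γ t)) := by
        linarith [dist_triangle_right (f (γ 0)) (f (γ z)) (f (γ t))]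
    _ ≤ C * K * (z - t) := hz
    _ < r * (z - t) := by gcongr

end Path

section Sphere

open NormedSpace RealInnerProductSpace

variable {E F : Type*} [NormedAddCommGroup E] [InnerProductSpace ℝ E]

lemma exists_lipschitz_path_sphere {a b : E} (ha : a ∈ sphere (0 : E) 1)
    (hb : b ∈ sphere (0 : E) 1) (hab : 0 ≤ ⟪a, b⟫) :
    ∃ γ : ℝ → E, γ 0 = a ∧ γ 1 = b ∧ MapsTo γ (Icc 0 1) (sphere 0 1) ∧
      LipschitzOnWith (4 * nndist a b) γ (Icc 0 1) := by
  have hnorm : MapsTo (AffineMap.lineMap a b) (Icc (0 : ℝ) 1)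
      {x : E | ((1 / 2 : ℝ≥0) : ℝ) ≤ ‖x‖} := by
    intro t ht
    have hsq : ‖AffineMap.lineMap a b t‖ ^ 2 =
        (1 - t) ^ 2 + 2 * ((1 - t) * t * ⟪a, b⟫) + t ^ 2 := by
      rw [AffineMap.lineMap_apply_module, norm_add_sq_real, norm_smul, norm_smul,
        real_inner_smul_left, real_inner_smul_right, mem_sphere_zero_iff_norm.1 ha,
        mem_sphere_zero_iff_norm.1 hb, mul_one, mul_one, Real.norm_eq_abs, Real.norm_eq_abs,
        sq_abs, sq_abs, mul_assoc]
    have hinner : 0 ≤ (1 - t) * t * ⟪a, b⟫ :=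
      mul_nonneg (mul_nonneg (sub_nonneg.2 ht.2) ht.1) hab
    refine le_of_sq_le_sq ?_ (norm_nonneg _)
    push_cast
    nlinarith [sq_nonneg (1 - 2 * t)]
  refine ⟨normalize ∘ AffineMap.lineMap a b, ?_, ?_, fun t ht => ?_, ?_⟩
  · simp [normalize_eq_self_of_mem_sphere ha]
  · simp [normalize_eq_self_of_mem_sphere hb]
  · exact normalize_mem_sphere (norm_pos_iff.1 (lt_of_lt_of_le (by norm_num) (hnorm ht)))
  · convert (lipschitzOnWith_normalize (by norm_num)).comp
      (lipschitzWith_lineMap a b).lipschitzOnWith hnorm using 2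
    norm_num

lemma exists_mem_sphere_inner_eq_zero (hE : 1 < Module.rank ℝ E) (a b : E) :
    ∃ e ∈ sphere (0 : E) 1, ⟪a, e⟫ = 0 ∧ 0 ≤ ⟪e, b⟫ := by
  have hne : (ℝ ∙ a)ᗮ ≠ ⊥ := by
    rw [Ne, Submodule.orthogonal_eq_bot_iff]
    intro htop
    have := rank_span_le (R := ℝ) {a}
    rw [htop, rank_top, Cardinal.mk_singleton] at this
    exact this.not_gt hE
  obtain ⟨w, hw, hw0⟩ := Submodule.exists_mem_ne_zero_of_ne_bot hne
  have hae : ⟪a, normalize w⟫ = 0 := by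
    rw [NormedSpace.normalize, real_inner_smul_right,
      Submodule.mem_orthogonal_singleton_iff_inner_right.1 hw, mul_zero]
  rcases le_total 0 ⟪normalize w, b⟫ with h | h
  · exact ⟨_, normalize_mem_sphere hw0, hae, h⟩
  · refine ⟨normalize (-w), normalize_mem_sphere (neg_ne_zero.2 hw0), ?_, ?_⟩
    · rw [normalize_neg, inner_neg_right, hae, neg_zero]
    · rwa [normalize_neg, inner_neg_left, neg_nonneg]

lemma dist_le_dist_of_inner_le {a b a' b' : E} (ha : a ∈ sphere (0 : E) 1)
    (hb : b ∈ sphere (0 : E) 1) (ha' : a' ∈ sphere (0 : E) 1) (hb' : b' ∈ sphere (0 : E) 1)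
    (h : ⟪a, b⟫ ≤ ⟪a', b'⟫) : dist a' b' ≤ dist a b := by
  rw [mem_sphere_zero_iff_norm] at ha hb ha' hb'
  rw [dist_eq_norm, dist_eq_norm, ← sq_le_sq₀ (norm_nonneg _) (norm_nonneg _), norm_sub_sq_real,
    norm_sub_sq_real, ha, hb, ha', hb']
  linarith

lemma lipschitzOnWith_sphere_of_path_bound [PseudoMetricSpace F] (hE : 1 < Module.rank ℝ E)
    {g : E → F} {L : ℝ≥0}
    (hg : ∀ (γ : ℝ → E) (K : ℝ≥0), MapsTo γ (Icc 0 1) (sphere 0 1) →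
      LipschitzOnWith K γ (Icc 0 1) → dist (g (γ 0)) (g (γ 1)) ≤ L * K) :
    LipschitzOnWith (8 * L) g (sphere 0 1) := by
  have arc {a b : E} (ha : a ∈ sphere (0 : E) 1) (hb : b ∈ sphere (0 : E) 1) (hab : 0 ≤ ⟪a, b⟫) :
      dist (g a) (g b) ≤ 4 * L * dist a b := by
    obtain ⟨γ, rfl, rfl, hγ, hγK⟩ := exists_lipschitz_path_sphere ha hb hab
    convert hg γ _ hγ hγK using 1
    push_cast
    ring
  refine LipschitzOnWith.of_dist_le_mul fun a ha b hb => ?_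
  rcases le_total 0 ⟪a, b⟫ with hab | hab
  · grw [arc ha hb hab]
    push_cast
    gcongr
    norm_num
  obtain ⟨e, he, hae, heb⟩ := exists_mem_sphere_inner_eq_zero hE a b
  have hdae : dist a e ≤ dist a b := dist_le_dist_of_inner_le ha hb ha he (hab.trans hae.ge)
  have hdeb : dist e b ≤ dist a b := dist_le_dist_of_inner_le ha hb he hb (hab.trans heb)
  calc dist (g a) (g b) ≤ 4 * L * dist a e + 4 * L * dist e b :=
        (dist_triangle _ _ _).trans (add_le_add (arc ha he hae.ge) (arc he hb heb))
    _ ≤ 4 * L * dist a b + 4 * L * dist a b := by gcongr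
    _ = ↑(8 * L) * dist a b := by push_cast; ring

lemma lipschitzOnWith_image_sphere [NormedAddCommGroup F] [NormedSpace ℝ F]
    {G : Type*} [NormedAddCommGroup G] [NormedSpace ℝ G]
    (hE : 1 < Module.rank ℝ E) {f : F → G} {f' : F → F →L[ℝ] G} {s : Set F} {δ l m : ℝ≥0}
    {X : E → F} {Y : F → E} (hf : ∀ x ∈ s, HasFDerivWithinAt f (f' x) s x)
    (hδ : ∀ x ∈ s, ‖f' x‖₊ ≤ δ) (hX : LipschitzOnWith l X (sphere 0 1))
    (hXs : MapsTo X (sphere 0 1) s) (hY : LipschitzOnWith m Y (X '' sphere 0 1))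
    (hYX : LeftInvOn Y X (sphere 0 1)) :
    LipschitzOnWith (8 * (δ * l) * m) f (X '' sphere 0 1) := by
  have hfX : LipschitzOnWith (8 * (δ * l)) (f ∘ X) (sphere 0 1) :=
    lipschitzOnWith_sphere_of_path_bound hE fun γ K hγ hγK => by
      have := dist_image_le_of_lipschitzOnWith_path hf hδ (hX.comp hγK hγ) (hXs.comp hγ)
      simpa [mul_assoc] using this
  have hYmaps : MapsTo Y (X '' sphere 0 1) (sphere 0 1) := by
    rintro _ ⟨a, ha, rfl⟩
    rwa [hYX ha]
  rintro _ ⟨a, ha, rfl⟩ _ ⟨b, hb, rfl⟩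
  simpa only [Function.comp_apply, hYX ha, hYX hb] using
    hfX.comp hY hYmaps (mem_image_of_mem X ha) (mem_image_of_mem X hb)

end Sphere

lemma convex_of_isPreconnected_of_finrank_eq_one {E : Type*} [NormedAddCommGroup E]
    [NormedSpace ℝ E] (hE : Module.finrank ℝ E = 1) {s : Set E} (hs : IsPreconnected s) :
    Convex ℝ s := by
  have : FiniteDimensional ℝ E := Module.finite_of_finrank_eq_succ hE
  let e : E ≃L[ℝ] ℝ := ContinuousLinearEquiv.ofFinrankEq (by simp [hE])
  have himage : Convex ℝ (e '' s) :=
    Real.convex_iff_isPreconnected.2 (hs.image e e.continuous.continuousOn)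
  simpa [preimage_image_eq s e.injective] using himage.linear_preimage e.toLinearMap

section Perturbation

variable {E F : Type*} [NormedAddCommGroup E] [NormedSpace ℝ E] [NormedAddCommGroup F]
  [NormedSpace ℝ F]

lemma subsingleton_or_lt_inv_nnnorm_refl_symm {c : ℝ≥0} (hc : c < 1) :
    Subsingleton E ∨ c < ‖((ContinuousLinearEquiv.refl ℝ E).symm : E →L[ℝ] E)‖₊⁻¹ := by
  rcases subsingleton_or_nontrivial E with h | h
  · exact .inl h
  · exact .inr (by simpa using hc)

variable [CompleteSpace E]

lemma isOpen_image_of_approximatesLinearOn {f : E → F} {f' : E ≃L[ℝ] F} {s : Set E} {c : ℝ≥0}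
    (hf : ApproximatesLinearOn f (f' : E →L[ℝ] F) s c)
    (hc : Subsingleton E ∨ c < ‖(f'.symm : F →L[ℝ] E)‖₊⁻¹) (hs : IsOpen s) : IsOpen (f '' s) :=
  hf.open_image f'.toNonlinearRightInverse hs (by rwa [f'.toEquiv.subsingleton_congr] at hc)

lemma isClosed_image_of_approximatesLinearOn {f : E → F} {f' : E ≃L[ℝ] F} {s : Set E} {c : ℝ≥0}
    (hf : ApproximatesLinearOn f (f' : E →L[ℝ] F) s c)
    (hc : Subsingleton E ∨ c < ‖(f'.symm : F →L[ℝ] E)‖₊⁻¹) (hs : IsClosed s) :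
    IsClosed (f '' s) := by
  have : CompleteSpace s := hs.completeSpace_coe
  rw [← range_domRestrict]
  exact (hf.antilipschitz hc).isClosed_range hf.lipschitz.uniformContinuous

lemma frontier_image_of_approximatesLinearOn {f : E → F} {f' : E ≃L[ℝ] F} {s : Set E} {c : ℝ≥0}
    (hf : ApproximatesLinearOn f (f' : E →L[ℝ] F) (closure s) c)
    (hc : Subsingleton E ∨ c < ‖(f'.symm : F →L[ℝ] E)‖₊⁻¹) (hs : IsOpen s) :
    frontier (f '' s) = f '' frontier s := by
  have hopen : IsOpen (f '' s) :=
    isOpen_image_of_approximatesLinearOn (hf.mono_set subset_closure) hc hs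
  have hclosure : closure (f '' s) = f '' closure s :=
    (closure_minimal (image_mono subset_closure)
      (isClosed_image_of_approximatesLinearOn hf hc isClosed_closure)).antisymm
      hf.continuousOn.image_closure
  rw [hopen.frontier_eq, hs.frontier_eq, hclosure, (hf.injOn hc).image_sdiff_subset subset_closure]

lemma exists_equiv_add_lipschitzWith {κ : ℝ≥0} (hκ : κ < 1) {K : E → E} (hK : LipschitzWith κ K) :
    ∃ T : E ≃ E, (∀ x, T x = x + K x) ∧ LipschitzWith (1 + κ) T ∧
      LipschitzWith (1 - κ)⁻¹ T.symm := by
  have happrox :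
      ApproximatesLinearOn (id + K) (ContinuousLinearEquiv.refl ℝ E : E →L[ℝ] E) univ κ :=
    LipschitzOnWith.approximatesLinearOn (by simpa [add_sub_cancel_left] using hK)
  let T : E ≃ₜ E := happrox.toHomeomorph _ (subsingleton_or_lt_inv_nnnorm_refl_symm hκ)
  have hanti : AntilipschitzWith (1 - κ)⁻¹ fun x => x + K x := by
    simpa using AntilipschitzWith.id.add_lipschitzWith hK (by simpa using hκ)
  exact ⟨T.toEquiv, fun _ => rfl, LipschitzWith.id.add hK, hanti.to_rightInverse T.apply_symm_apply⟩

end Perturbation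

section Cone

open NormedSpace

variable {E F : Type*} [NormedAddCommGroup E] [NormedSpace ℝ E] [NormedAddCommGroup F]
  [NormedSpace ℝ F]

/-- The extension of a map on the unit sphere to a positively homogeneous map of degree one on the
whole space. -/
def coneExtension (k : E → F) (x : E) : F := ‖x‖ • k (normalize x)

lemma coneExtension_smul (k : E → F) {t : ℝ} (ht : 0 ≤ t) (x : E) :
    coneExtension k (t • x) = t • coneExtension k x := by
  rcases ht.eq_or_lt with rfl | ht
  · simp [coneExtension]
  · rw [coneExtension, coneExtension, normalize_smul_of_pos ht, norm_smul_of_nonneg ht.le, mul_smul]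

lemma coneExtension_of_mem_sphere (k : E → F) {a : E} (ha : a ∈ sphere (0 : E) 1) :
    coneExtension k a = k a := by
  rw [coneExtension, normalize_eq_self_of_mem_sphere ha, mem_sphere_zero_iff_norm.1 ha, one_smul]

lemma lipschitzWith_coneExtension {k : E → F} {B L : ℝ≥0} (hL : LipschitzOnWith L k (sphere 0 1))
    (hB : ∀ a ∈ sphere (0 : E) 1, ‖k a‖ ≤ B) : LipschitzWith (B + 2 * L) (coneExtension k) := by
  have hzero : coneExtension k 0 = 0 := by simp [coneExtension]
  have hnorm {x : E} (hx : x ≠ 0) : dist (coneExtension k x) 0 ≤ ↑(B + 2 * L) * dist x 0 := by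
    rw [dist_zero_right, dist_zero_right, coneExtension, norm_smul, norm_norm, mul_comm]
    gcongr
    exact (hB _ (normalize_mem_sphere hx)).trans (by push_cast; linarith [L.coe_nonneg])
  refine LipschitzWith.of_dist_le_mul fun x y => ?_
  rcases eq_or_ne x 0 with rfl | hx
  · rcases eq_or_ne y 0 with rfl | hy
    · simp
    · rw [hzero, dist_comm, dist_comm 0 y]
      exact hnorm hy
  rcases eq_or_ne y 0 with rfl | hy
  · rw [hzero]
    exact hnorm hx
  calc dist (‖x‖ • k (normalize x)) (‖y‖ • k (normalize y))
      ≤ dist (‖x‖ • k (normalize x)) (‖x‖ • k (normalize y)) +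
          dist (‖x‖ • k (normalize y)) (‖y‖ • k (normalize y)) := dist_triangle _ _ _
    _ ≤ ‖x‖ * dist (k (normalize x)) (k (normalize y)) + dist ‖x‖ ‖y‖ * ‖k (normalize y)‖ :=
        add_le_add ((dist_smul_le _ _ _).trans_eq (by rw [norm_norm]))
          ((dist_pair_smul _ _ _).trans (by rw [dist_zero_right]))
    _ ≤ ‖x‖ * (L * dist (normalize x) (normalize y)) + dist x y * B := by
        gcongr
        exacts [hL.dist_le_mul _ (normalize_mem_sphere hx) _ (normalize_mem_sphere hy),
          (dist_norm_norm_le x y).trans_eq (dist_eq_norm x y).symm, hB _ (normalize_mem_sphere hy)]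
    _ = L * (‖x‖ * dist (normalize x) (normalize y)) + B * dist x y := by ring
    _ ≤ L * (2 * dist x y) + B * dist x y := by grw [norm_mul_dist_normalize_le x hy]
    _ = ↑(B + 2 * L) * dist x y := by push_cast; ring

end Cone

section RadialGraph

open NormedSpace

variable {E : Type*} [NormedAddCommGroup E]

lemma norm_symm_mem_Icc {L : ℝ≥0} (hL : 0 < L) {T : E ≃ E} (hT : LipschitzWith L T)
    (hT' : LipschitzWith L T.symm) (hzero : T 0 = 0) {a : E} (ha : a ∈ sphere (0 : E) 1) :
    ‖T.symm a‖ ∈ Icc ((L⁻¹ : ℝ≥0) : ℝ) L := by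
  rw [mem_sphere_zero_iff_norm] at ha
  have hge := hT.norm_le_mul hzero (T.symm a)
  have hle := hT'.norm_le_mul (T.symm_apply_eq.2 hzero.symm) a
  rw [T.apply_symm_apply, ha] at hge
  rw [ha, mul_one] at hle
  exact ⟨by rwa [NNReal.coe_inv, inv_le_iff_one_le_mul₀' (NNReal.coe_pos.2 hL)], hle⟩

/-- The radius functions allowed for an `M`-Lipschitz graph domain: functions on the unit sphere
which are `M`-Lipschitz and take values in `[1 / (1 + M), 1]`. -/
structure IsLipschitzRadius (M : ℝ≥0) (r : E → ℝ) : Prop where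
  lipschitzOnWith : LipschitzOnWith M r (sphere 0 1)
  inv_le : ∀ a ∈ sphere (0 : E) 1, (1 + M : ℝ)⁻¹ ≤ r a
  le_one : ∀ a ∈ sphere (0 : E) 1, r a ≤ 1

namespace IsLipschitzRadius

variable {M : ℝ≥0} {r : E → ℝ}

lemma pos (hr : IsLipschitzRadius M r) {a : E} (ha : a ∈ sphere (0 : E) 1) : 0 < r a :=
  lt_of_lt_of_le (by positivity) (hr.inv_le a ha)

lemma abs_le_one (hr : IsLipschitzRadius M r) {a : E} (ha : a ∈ sphere (0 : E) 1) : |r a| ≤ 1 := by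
  rw [abs_of_pos (hr.pos ha)]
  exact hr.le_one a ha

lemma lipschitzOnWith_inv (hr : IsLipschitzRadius M r) :
    LipschitzOnWith (M * (1 + M) ^ 2) (fun a => (r a)⁻¹) (sphere 0 1) := by
  simpa [div_eq_mul_inv] using lipschitzOnWith_inv_real (m := (1 + M)⁻¹) hr.lipschitzOnWith
    (by positivity) (fun a ha => by simpa using hr.inv_le a ha)

lemma abs_inv_le (hr : IsLipschitzRadius M r) {a : E} (ha : a ∈ sphere (0 : E) 1) :
    |(r a)⁻¹| ≤ 1 + M := by
  rw [abs_of_pos (inv_pos.2 (hr.pos ha))]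
  exact inv_le_of_inv_le₀ (by positivity) (hr.inv_le a ha)

end IsLipschitzRadius

variable [NormedSpace ℝ E]

/-- The hypersurface `{r(θ) θ : ‖θ‖ = 1}`, star-shaped around the origin when `r` is positive. Only
the values of `r` on the unit sphere matter. -/
def radialGraph (r : E → ℝ) : Set E := (fun θ => r θ • θ) '' sphere 0 1

lemma smul_image_radialGraph (t : ℝ) (r : E → ℝ) :
    (t • ·) '' radialGraph r = radialGraph fun a => t * r a := by
  simp only [radialGraph, image_image, smul_smul]

lemma image_radialGraph {T : E ≃ E} (hT : ∀ t : ℝ, 0 ≤ t → ∀ x, T (t • x) = t • T x) {r : E → ℝ}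
    (hr : ∀ a ∈ sphere (0 : E) 1, 0 ≤ r a) :
    T '' radialGraph r = radialGraph fun a => r (normalize (T.symm a)) / ‖T.symm a‖ := by
  have hzero : T 0 = 0 := by simpa using hT 0 le_rfl 0
  have hsymm {t : ℝ} (ht : 0 ≤ t) (x : E) : T.symm (t • x) = t • T.symm x := by
    rw [Equiv.symm_apply_eq, hT t ht, T.apply_symm_apply]
  rw [radialGraph, image_image]
  refine Subset.antisymm ?_ ?_
  · rintro _ ⟨a, ha, rfl⟩
    have ha1 : ‖a‖ = 1 := mem_sphere_zero_iff_norm.1 ha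
    have hTa : T a ≠ 0 := fun h => by
      simp [T.injective (h.trans hzero.symm)] at ha1
    have hinv : T.symm (normalize (T a)) = ‖T a‖⁻¹ • a := by
      rw [NormedSpace.normalize, hsymm (by positivity), T.symm_apply_apply]
    refine ⟨normalize (T a), normalize_mem_sphere hTa, ?_⟩
    simp only [hinv, normalize_smul_of_pos (inv_pos.2 (norm_pos_iff.2 hTa)),
      normalize_eq_self_of_mem_sphere ha, norm_smul, norm_inv, norm_norm, ha1, mul_one,
      div_inv_eq_mul]
    rw [mul_smul, norm_smul_normalize, hT _ (hr a ha)]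
  · rintro _ ⟨b, hb, rfl⟩
    have hGb : T.symm b ≠ 0 := fun h => by
      have : b = 0 := by rw [← T.apply_symm_apply b, h, hzero]
      simp [this] at hb
    refine ⟨normalize (T.symm b), normalize_mem_sphere hGb, ?_⟩
    simp only
    rw [hT _ (hr _ (normalize_mem_sphere hGb)), NormedSpace.normalize, hT _ (by positivity),
      T.apply_symm_apply, smul_smul, div_eq_mul_inv]

namespace IsLipschitzRadius

variable {M : ℝ≥0} {r : E → ℝ}

lemma norm_smul_self (hr : IsLipschitzRadius M r) {a : E} (ha : a ∈ sphere (0 : E) 1) :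
    ‖r a • a‖ = r a := by
  rw [norm_smul_of_nonneg (hr.pos ha).le, mem_sphere_zero_iff_norm.1 ha, mul_one]

lemma norm_le_one (hr : IsLipschitzRadius M r) {y : E} (hy : y ∈ radialGraph r) : ‖y‖ ≤ 1 := by
  obtain ⟨a, ha, rfl⟩ := hy
  exact (hr.norm_smul_self ha).trans_le (hr.le_one a ha)

lemma lipschitzOnWith_smul_self (hr : IsLipschitzRadius M r) :
    LipschitzOnWith (1 + M) (fun a => r a • a) (sphere 0 1) := by
  simpa using lipschitzOnWith_smul_of_bounded (Bc := 1) (Bf := 1) hr.lipschitzOnWith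
    (fun a ha => by simpa using hr.abs_le_one ha) LipschitzWith.id.lipschitzOnWith
    (fun a ha => by simpa using (mem_sphere_zero_iff_norm.1 ha).le)

lemma image {L : ℝ≥0} (hL : 0 < L) (hr : IsLipschitzRadius M r) {T : E ≃ E}
    (hT : LipschitzWith L T) (hT' : LipschitzWith L T.symm) (hzero : T 0 = 0) :
    IsLipschitzRadius (L ^ 2 * (1 + 2 * M))
      fun a => (L : ℝ)⁻¹ * (r (normalize (T.symm a)) / ‖T.symm a‖) := by
  have hL' : (0 : ℝ) < L := hL
  have hG {a : E} (ha : a ∈ sphere (0 : E) 1) : ‖T.symm a‖ ∈ Icc ((L⁻¹ : ℝ≥0) : ℝ) L :=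
    norm_symm_mem_Icc hL hT hT' hzero ha
  have hG_pos {a : E} (ha : a ∈ sphere (0 : E) 1) : 0 < ‖T.symm a‖ :=
    lt_of_lt_of_le (by positivity) (hG ha).1
  have hG_inv_le {a : E} (ha : a ∈ sphere (0 : E) 1) : ‖T.symm a‖⁻¹ ≤ L :=
    inv_le_of_inv_le₀ hL' (hG ha).1
  have hdir : MapsTo (fun a => normalize (T.symm a)) (sphere (0 : E) 1) (sphere 0 1) := fun a ha =>
    normalize_mem_sphere (norm_pos_iff.1 (hG_pos ha))
  have hrG : LipschitzOnWith (M * (2 / L⁻¹ * L)) (fun a => r (normalize (T.symm a))) (sphere 0 1) :=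
    hr.lipschitzOnWith.comp ((lipschitzOnWith_normalize (inv_pos.2 hL)).comp
      hT'.lipschitzOnWith fun a ha => (hG ha).1) hdir
  have hGinv : LipschitzOnWith (L / L⁻¹ ^ 2) (fun a => ‖T.symm a‖⁻¹) (sphere 0 1) := by
    refine lipschitzOnWith_inv_real ?_ (inv_pos.2 hL) fun a ha => (hG ha).1
    simpa [Function.comp_def] using
      (lipschitzWith_one_norm.comp hT').lipschitzOnWith (s := sphere 0 1)
  refine ⟨?_, fun a ha => ?_, fun a ha => ?_⟩
  · have hprod := lipschitzOnWith_smul_of_bounded (Bc := 1) (Bf := L) hrG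
      (fun a ha => by simpa using hr.abs_le_one (hdir ha)) hGinv
      (fun a ha => by simpa using hG_inv_le ha)
    have hconst : L ^ 2 * (1 + 2 * M) =
        ‖(L : ℝ)⁻¹‖₊ * (1 * (L / L⁻¹ ^ 2) + M * (2 / L⁻¹ * L) * L) := by
      rw [nnnorm_inv, NNReal.nnnorm_eq]
      field_simp
    rw [hconst]
    exact (lipschitzWith_smul (L : ℝ)⁻¹).comp_lipschitzOnWith hprod
  · calc (1 + (L ^ 2 * (1 + 2 * M) : ℝ≥0) : ℝ)⁻¹ ≤ (L : ℝ)⁻¹ * ((1 + M : ℝ)⁻¹ / L) := by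
          rw [div_eq_mul_inv, ← mul_inv, ← mul_inv]
          push_cast
          gcongr
          nlinarith [mul_nonneg (sq_nonneg (L : ℝ)) M.coe_nonneg]
      _ ≤ _ := by
          gcongr
          exacts [(hr.pos (hdir ha)).le, hG_pos ha, hr.inv_le _ (hdir ha), (hG ha).2]
  · rw [inv_mul_le_iff₀ hL', mul_one, div_eq_mul_inv]
    exact (mul_le_of_le_one_left (by positivity) (hr.le_one _ (hdir ha))).trans (hG_inv_le ha)

lemma eqOn_coneExtension_radialGraph (hr : IsLipschitzRadius M r) (g : E → E) :
    EqOn (coneExtension fun a => (r a)⁻¹ • g (r a • a)) g (radialGraph r) := by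
  rintro _ ⟨a, ha, rfl⟩
  simp only
  rw [coneExtension_smul _ (hr.pos ha).le, coneExtension_of_mem_sphere _ ha,
    smul_inv_smul₀ (hr.pos ha).ne']

lemma lipschitzWith_coneExtension_of_radialGraph {ε : ℝ≥0} (hr : IsLipschitzRadius M r) {g : E → E}
    (hg : LipschitzOnWith ε g (radialGraph r)) {y₀ : E} (hy₀ : y₀ ∈ radialGraph r)
    (hgy₀ : g y₀ = 0) :
    LipschitzWith (4 * ε * (1 + M) ^ 3) (coneExtension fun a => (r a)⁻¹ • g (r a • a)) := by
  have hh : LipschitzOnWith (ε * (1 + M)) (fun a => g (r a • a)) (sphere 0 1) :=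
    hg.comp hr.lipschitzOnWith_smul_self fun a ha => mem_image_of_mem _ ha
  have hhε (a) (ha : a ∈ sphere (0 : E) 1) : ‖g (r a • a)‖ ≤ (2 * ε : ℝ≥0) := by
    have h := hg.norm_sub_le (mem_image_of_mem _ ha) hy₀
    grw [hgy₀, sub_zero, norm_sub_le, hr.norm_smul_self ha, hr.norm_le_one hy₀,
      hr.le_one a ha] at h
    exact h.trans_eq (by push_cast; ring)
  have hk := lipschitzOnWith_smul_of_bounded (Bc := 1 + M) hr.lipschitzOnWith_inv
    (fun a ha => hr.abs_inv_le ha) hh hhε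
  have hkε (a) (ha : a ∈ sphere (0 : E) 1) :
      ‖(r a)⁻¹ • g (r a • a)‖ ≤ ((1 + M) * (2 * ε) : ℝ≥0) := by
    rw [norm_smul]
    exact mul_le_mul (hr.abs_inv_le ha) (hhε a ha) (norm_nonneg _) (NNReal.coe_nonneg (1 + M))
  refine (lipschitzWith_coneExtension hk hkε).weaken ?_
  calc (1 + M) * (2 * ε) + 2 * ((1 + M) * (ε * (1 + M)) + M * (1 + M) ^ 2 * (2 * ε))
      = 2 * ε * (1 + M) * (2 + 3 * M + 2 * M ^ 2) := by ring
    _ ≤ 2 * ε * (1 + M) * (2 + 4 * M + 2 * M ^ 2) := by gcongr; norm_num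
    _ = 4 * ε * (1 + M) ^ 3 := by ring

lemma exists_image_add_eq_radialGraph [CompleteSpace E] {ε : ℝ≥0} (hε : 8 * ε * (1 + M) ^ 3 ≤ 1)
    (hr : IsLipschitzRadius M r) {g : E → E} (hg : LipschitzOnWith ε g (radialGraph r))
    {y₀ : E} (hy₀ : y₀ ∈ radialGraph r) (hgy₀ : g y₀ = 0) :
    ∃ r' : E → ℝ, IsLipschitzRadius (4 * (1 + 2 * M)) r' ∧
      (fun y => (2⁻¹ : ℝ) • (y + g y)) '' radialGraph r = radialGraph r' := by
  have hK : LipschitzWith 2⁻¹ (coneExtension fun a => (r a)⁻¹ • g (r a • a)) := by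
    refine (hr.lipschitzWith_coneExtension_of_radialGraph hg hy₀ hgy₀).weaken ?_
    calc 4 * ε * (1 + M) ^ 3 = 2⁻¹ * (8 * ε * (1 + M) ^ 3) := by field_simp; ring
      _ ≤ 2⁻¹ := mul_le_of_le_one_right' hε
  obtain ⟨T, hTK, hT, hT'⟩ := exists_equiv_add_lipschitzWith (by norm_num) hK
  have hhom (t : ℝ) (ht : 0 ≤ t) (x : E) : T (t • x) = t • T x := by
    rw [hTK, hTK, coneExtension_smul _ ht, smul_add]
  have hTg : EqOn T (fun y => y + g y) (radialGraph r) := fun y hy => by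
    rw [hTK, hr.eqOn_coneExtension_radialGraph g hy]
  have hthree_halves : (1 + 2⁻¹ : ℝ≥0) ≤ 2 := by
    rw [← NNReal.coe_le_coe]
    norm_num
  have htwo : (1 - 2⁻¹ : ℝ≥0)⁻¹ = 2 := by
    rw [← NNReal.coe_inj]
    norm_num
  have hr' := hr.image two_pos (hT.weaken hthree_halves) (hT'.weaken htwo.le)
    (by simpa using hhom 0 le_rfl 0)
  refine ⟨_, by convert hr' using 2; norm_num, ?_⟩
  rw [← image_image (fun y => (2⁻¹ : ℝ) • y) (fun y => y + g y), ← hTg.image_eq,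
    image_radialGraph hhom fun a ha => (hr.pos ha).le, smul_image_radialGraph]
  rfl

end IsLipschitzRadius

end RadialGraph

section Similarity

variable {E : Type*} [NormedAddCommGroup E] [NormedSpace ℝ E]

/-- The similarity `x ↦ c • R x + b` of ratio `|c|` with linear isometric part `R`, as a
homeomorphism. -/
def similarity (c : ℝ) (hc : c ≠ 0) (R : E ≃ₗᵢ[ℝ] E) (b : E) : E ≃ₜ E :=
  R.toHomeomorph.trans ((Homeomorph.smulOfNeZero c hc).trans (Homeomorph.addRight b))

lemma similarity_apply (c : ℝ) (hc : c ≠ 0) (R : E ≃ₗᵢ[ℝ] E) (b x : E) :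
    similarity c hc R b x = c • R x + b := rfl

lemma nndist_similarity (c : ℝ) (hc : c ≠ 0) (R : E ≃ₗᵢ[ℝ] E) (b x y : E) :
    nndist (similarity c hc R b x) (similarity c hc R b y) = ‖c‖₊ * nndist x y := by
  rw [similarity_apply, similarity_apply, nndist_add_right, nndist_smul₀, R.isometry.nndist_eq]

lemma lipschitzWith_similarity (c : ℝ) (hc : c ≠ 0) (R : E ≃ₗᵢ[ℝ] E) (b : E) :
    LipschitzWith ‖c‖₊ (similarity c hc R b) :=
  LipschitzWith.of_dist_le_mul fun x y => by
    exact_mod_cast (nndist_similarity c hc R b x y).le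

lemma lipschitzWith_similarity_symm (c : ℝ) (hc : c ≠ 0) (R : E ≃ₗᵢ[ℝ] E) (b : E) :
    LipschitzWith ‖c‖₊⁻¹ (similarity c hc R b).symm := by
  refine AntilipschitzWith.to_rightInverse (f := similarity c hc R b)
    (AntilipschitzWith.of_le_mul_nndist fun x y => ?_) (similarity c hc R b).apply_symm_apply
  rw [nndist_similarity, inv_mul_cancel_left₀ (nnnorm_ne_zero_iff.2 hc)]

lemma lipschitzOnWith_conj_similarity {c : ℝ} (hc : c ≠ 0) (R : E ≃ₗᵢ[ℝ] E) (b : E) {ε : ℝ≥0}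
    {f : E → E} {s : Set E} (hf : LipschitzOnWith ε f s) (v : E) :
    LipschitzOnWith ε (fun y => c • R (f ((similarity c hc R b).symm y) - v))
      (similarity c hc R b '' s) := by
  rintro _ ⟨x, hx, rfl⟩ _ ⟨y, hy, rfl⟩
  simp only [edist_nndist, Homeomorph.symm_apply_apply, nndist_similarity, nndist_smul₀,
    R.isometry.nndist_eq, nndist_sub_right]
  rw [← ENNReal.coe_mul, ENNReal.coe_le_coe, mul_left_comm]
  gcongr
  exact_mod_cast hf.dist_le_mul x hx y hy

end Similarity

lemma isLipschitzGraphDomain_iff {d : ℕ} {M : ℝ≥0} {Ω : Set (EuclideanSpace ℝ (Fin (d + 1)))} :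
    IsLipschitzGraphDomain d M Ω ↔ IsOpen Ω ∧ IsConnected Ω ∧ ∃ (c : ℝ) (hc : 0 < c)
      (R : EuclideanSpace ℝ (Fin (d + 1)) ≃ₗᵢ[ℝ] EuclideanSpace ℝ (Fin (d + 1)))
      (b : EuclideanSpace ℝ (Fin (d + 1))) (r : EuclideanSpace ℝ (Fin (d + 1)) → ℝ),
      IsLipschitzRadius M r ∧ similarity c hc.ne' R b '' frontier Ω = radialGraph r := by
  refine and_congr_right' (and_congr_right' ?_)
  refine exists_congr fun c => ⟨?_, ?_⟩
  · rintro ⟨R, b, r, hc, hfrontier, hlip, hbound⟩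
    refine ⟨hc, R, b, r, ⟨LipschitzOnWith.of_dist_le_mul hlip, fun a ha => ?_, fun a ha =>
      (hbound a ha).2⟩, ?_⟩
    · simpa only [one_div] using (hbound a ha).1
    · rw [Homeomorph.image_frontier]
      refine hfrontier.trans ?_
      simp only [radialGraph, image, eq_comm]
  · rintro ⟨hc, R, b, r, hr, hfrontier⟩
    refine ⟨R, b, r, hc, ?_, hr.lipschitzOnWith.dist_le_mul, fun a ha =>
      ⟨(one_div _).trans_le (hr.inv_le a ha), hr.le_one a ha⟩⟩
    rw [Homeomorph.image_frontier] at hfrontier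
    refine hfrontier.trans ?_
    simp only [radialGraph, image, eq_comm]

namespace IsLipschitzGraphDomain

variable {d : ℕ} {Ω : Set (EuclideanSpace ℝ (Fin (d + 1)))}

lemma nonneg {M : ℝ} (hΩ : IsLipschitzGraphDomain d M Ω) : 0 ≤ M := by
  obtain ⟨-, -, c, R, b, r, -, -, hr, -⟩ := hΩ
  obtain ⟨a, ha⟩ : (sphere (0 : EuclideanSpace ℝ (Fin (d + 1))) 1).Nonempty :=
    NormedSpace.sphere_nonempty.2 zero_le_one
  have hne : a ≠ -a := fun h =>
    ne_neg_of_mem_unit_sphere ℝ (⟨a, ha⟩ : sphere (0 : EuclideanSpace ℝ _) 1) (Subtype.ext h)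
  have hle := hr a ha (-a) (by simpa using ha)
  exact nonneg_of_mul_nonneg_left ((abs_nonneg _).trans hle) (dist_pos.2 hne)

lemma frontier_nonempty {M : ℝ≥0} (hΩ : IsLipschitzGraphDomain d M Ω) :
    (frontier Ω).Nonempty := by
  obtain ⟨-, -, c, hc, R, b, r, -, hΩr⟩ := isLipschitzGraphDomain_iff.1 hΩ
  rw [← image_nonempty, hΩr, radialGraph, image_nonempty]
  exact NormedSpace.sphere_nonempty.2 zero_le_one

variable {M δ : ℝ≥0} {F : Type*} [NormedAddCommGroup F] [NormedSpace ℝ F]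
  {f : EuclideanSpace ℝ (Fin (d + 1)) → F}
  {f' : EuclideanSpace ℝ (Fin (d + 1)) → EuclideanSpace ℝ (Fin (d + 1)) →L[ℝ] F}

lemma lipschitzOnWith_frontier (hΩ : IsLipschitzGraphDomain d M Ω) (hd : d ≠ 0)
    (hf : ∀ x ∈ closure Ω, HasFDerivWithinAt f (f' x) (closure Ω) x)
    (hδ : ∀ x ∈ closure Ω, ‖f' x‖₊ ≤ δ) :
    LipschitzOnWith (16 * δ * (1 + M) ^ 2) f (frontier Ω) := by
  obtain ⟨-, -, c, hc, R, b, r, hr, hΩr⟩ := isLipschitzGraphDomain_iff.1 hΩ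
  let σ := similarity c hc.ne' R b
  have hparam : (fun a => σ.symm (r a • a)) '' sphere 0 1 = frontier Ω := by
    rw [← image_image σ.symm (fun a => r a • a), ← radialGraph, ← hΩr]
    exact σ.toEquiv.symm_image_image _
  have hrank : 1 < Module.rank ℝ (EuclideanSpace ℝ (Fin (d + 1))) := by
    rw [← Module.finrank_eq_rank, finrank_euclideanSpace_fin]
    exact_mod_cast (by omega : 1 < d + 1)
  have hnormalize : LipschitzOnWith (2 / (1 + M)⁻¹ * ‖c‖₊) (fun x => NormedSpace.normalize (σ x))
      ((fun a => σ.symm (r a • a)) '' sphere 0 1) := by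
    refine (lipschitzOnWith_normalize (by positivity)).comp
      (lipschitzWith_similarity c hc.ne' R b).lipschitzOnWith ?_
    rintro _ ⟨a, ha, rfl⟩
    simpa [σ, hr.norm_smul_self ha] using hr.inv_le a ha
  have hconst : 16 * δ * (1 + M) ^ 2 =
      8 * (δ * (‖c‖₊⁻¹ * (1 + M))) * (2 / (1 + M)⁻¹ * ‖c‖₊) := by
    have : ‖c‖₊ ≠ 0 := nnnorm_ne_zero_iff.2 hc.ne'
    field_simp
    ring
  rw [hconst, ← hparam]
  refine lipschitzOnWith_image_sphere hrank hf hδ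
    ((lipschitzWith_similarity_symm c hc.ne' R b).comp_lipschitzOnWith hr.lipschitzOnWith_smul_self)
    (fun a ha => frontier_subset_closure (hparam.subset (mem_image_of_mem _ ha))) hnormalize ?_
  intro a ha
  simp only [σ.apply_symm_apply, NormedSpace.normalize_smul_of_pos (hr.pos ha),
    normalize_eq_self_of_mem_sphere ha]

lemma lipschitzOnWith_closure (hΩ : IsLipschitzGraphDomain d M Ω)
    (hf : ∀ x ∈ closure Ω, HasFDerivWithinAt f (f' x) (closure Ω) x)
    (hδ : ∀ x ∈ closure Ω, ‖f' x‖₊ ≤ δ) :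
    LipschitzOnWith (16 * δ * (1 + M) ^ 2) f (closure Ω) := by
  have hconvex {s : Set (EuclideanSpace ℝ (Fin (d + 1)))} (hs : Convex ℝ s) (hsΩ : s ⊆ closure Ω) :
      LipschitzOnWith (16 * δ * (1 + M) ^ 2) f s := by
    refine (hs.lipschitzOnWith_of_nnnorm_hasFDerivWithin_le (fun x hx => (hf x (hsΩ hx)).mono hsΩ)
      fun x hx => hδ x (hsΩ hx)).weaken ?_
    calc δ = 1 * δ * 1 ^ 2 := by ring
      _ ≤ 16 * δ * (1 + M) ^ 2 := by
        gcongr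
        exacts [by norm_num, le_self_add]
  rcases eq_or_ne d 0 with rfl | hd
  · exact hconvex (convex_of_isPreconnected_of_finrank_eq_one (by simp)
      hΩ.2.1.isPreconnected.closure) Subset.rfl
  refine lipschitzOnWith_of_lipschitzOnWith_frontier isClosed_closure (fun x y hxy => ?_)
    ((hΩ.lipschitzOnWith_frontier hd hf hδ).mono frontier_closure_subset)
  exact (hconvex (convex_segment x y) hxy).dist_le_mul x (left_mem_segment ℝ x y) y
    (right_mem_segment ℝ x y)

lemma image_id_add {ε : ℝ≥0} {f : EuclideanSpace ℝ (Fin (d + 1)) → EuclideanSpace ℝ (Fin (d + 1))}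
    (hΩ : IsLipschitzGraphDomain d M Ω) (hε : 8 * ε * (1 + M) ^ 3 ≤ 1)
    (hf : LipschitzOnWith ε f (closure Ω)) :
    IsLipschitzGraphDomain d (4 * (1 + 2 * M) : ℝ≥0) ((id + f) '' Ω) := by
  obtain ⟨hopen, hconn, c, hc, R, b, r, hr, hΩr⟩ := isLipschitzGraphDomain_iff.1 hΩ
  obtain ⟨x₀, hx₀⟩ := hΩ.frontier_nonempty
  have hε1 : ε < 1 := by
    by_contra! h
    have : 8 * 1 * 1 ^ 3 ≤ 8 * ε * (1 + M) ^ 3 := by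
      gcongr
      exact le_self_add
    exact absurd (this.trans hε) (by norm_num)
  have hφ : ApproximatesLinearOn (id + f) (ContinuousLinearEquiv.refl ℝ
      (EuclideanSpace ℝ (Fin (d + 1))) : _ →L[ℝ] _) (closure Ω) ε :=
    LipschitzOnWith.approximatesLinearOn (by simpa [add_sub_cancel_left] using hf)
  have hrefl := subsingleton_or_lt_inv_nnnorm_refl_symm (E := EuclideanSpace ℝ (Fin (d + 1))) hε1
  let σ := similarity c hc.ne' R b
  let g := fun y => c • R (f (σ.symm y) - f x₀)
  obtain ⟨r', hr', hgr'⟩ := hr.exists_image_add_eq_radialGraph hε (g := g)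
    (hΩr ▸ lipschitzOnWith_conj_similarity hc.ne' R b (hf.mono frontier_subset_closure) (f x₀))
    (hΩr ▸ mem_image_of_mem σ hx₀) (by simp [g])
  refine isLipschitzGraphDomain_iff.2
    ⟨isOpen_image_of_approximatesLinearOn (hφ.mono_set subset_closure) hrefl hopen,
      hconn.image _ (hφ.continuousOn.mono subset_closure),
      2⁻¹ * c, by positivity, R, (2⁻¹ : ℝ) • (b - c • R (f x₀)), r', hr', ?_⟩
  rw [frontier_image_of_approximatesLinearOn hφ hrefl hopen, ← hgr', ← hΩr, image_image,
    image_image]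
  refine image_congr fun x _ => ?_
  simp only [g, σ, Homeomorph.symm_apply_apply]
  simp only [similarity_apply, Pi.add_apply, id, map_add, map_sub]
  module

end IsLipschitzGraphDomain

theorem image_lipschitz_graph_domain_of_near_identity_general {d : ℕ} {M : ℝ}
    {Ω : Set (EuclideanSpace ℝ (Fin (d + 1)))}
    {φ : EuclideanSpace ℝ (Fin (d + 1)) → EuclideanSpace ℝ (Fin (d + 1))}
    {φ' : EuclideanSpace ℝ (Fin (d + 1)) →
      EuclideanSpace ℝ (Fin (d + 1)) →L[ℝ] EuclideanSpace ℝ (Fin (d + 1))}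
    (hΩ : IsLipschitzGraphDomain d M Ω)
    (hφ : ∀ z ∈ closure Ω, HasFDerivWithinAt φ (φ' z) (closure Ω) z)
    (hφ' : ∀ z ∈ closure Ω, ‖φ' z - ContinuousLinearMap.id ℝ (EuclideanSpace ℝ (Fin (d + 1)))‖ ≤
      1 / (128 * (1 + M) ^ 5)) :
    IsLipschitzGraphDomain d (4 * (1 + 2 * M)) (φ '' Ω) := by
  lift M to ℝ≥0 using hΩ.nonneg
  have hlip : LipschitzOnWith (16 * (1 / (128 * (1 + M) ^ 5)) * (1 + M) ^ 2) (φ - id) (closure Ω) :=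
    hΩ.lipschitzOnWith_closure (fun z hz => (hφ z hz).sub (hasFDerivWithinAt_id z _))
      fun z hz => by exact_mod_cast hφ' z hz
  have h := hΩ.image_id_add (by field_simp; norm_num) hlip
  rw [add_sub_cancel] at h
  exact_mod_cast h

/-- **Lemma `l:id-lip-graph`**: if `Ω` is an `L₀`-Lipschitz graph domain and `φ` is a
`(1+δ)`-bi-Lipschitz `C¹` map on a neighborhood of the closure of `Ω` whose derivative is
`δ`-close to the identity, with `δ < δ₀(L₀,d)`, then `φ(Ω)` is an `L₁(L₀,d)`-Lipschitz graph
domain. -/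
theorem image_lipschitz_graph_domain_of_near_identity (d : ℕ) (L₀ : ℝ) :
    ∃ δ₀ L₁ : ℝ, 0 < δ₀ ∧ 0 < L₁ ∧
      ∀ (Ω : Set (EuclideanSpace ℝ (Fin (d + 1)))) (φ : EuclideanSpace ℝ (Fin (d + 1)) → EuclideanSpace ℝ (Fin (d + 1))) (δ : ℝ) (U : Set (EuclideanSpace ℝ (Fin (d + 1)))),
        IsLipschitzGraphDomain d L₀ Ω →
        0 < δ → δ < δ₀ →
        IsOpen U → closure Ω ⊆ U → ContDiffOn ℝ 1 φ U →
        (∀ z ∈ closure Ω, ∀ z' ∈ closure Ω,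
          (1 + δ)⁻¹ * dist z z' ≤ dist (φ z) (φ z') ∧
            dist (φ z) (φ z') ≤ (1 + δ) * dist z z') →
        (∀ z ∈ closure Ω,
          ‖fderiv ℝ φ z - ContinuousLinearMap.id ℝ (EuclideanSpace ℝ (Fin (d + 1)))‖ ≤ δ) →
        IsLipschitzGraphDomain d L₁ (φ '' Ω) := by
  refine ⟨1 / (128 * (1 + |L₀|) ^ 5), 4 * (1 + 2 * |L₀|), by positivity, by positivity, ?_⟩
  intro Ω φ δ U hΩ _ hδ hU hΩU hφ _ hφ'
  rw [abs_of_nonneg hΩ.nonneg] at hδ ⊢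
  exact image_lipschitz_graph_domain_of_near_identity_general hΩ
    (fun z hz => ((hφ.contDiffAt (hU.mem_nhds (hΩU hz))).differentiableAt
      one_ne_zero).hasFDerivAt.hasFDerivWithinAt) fun z hz => (hφ' z hz).trans hδ.le

end
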